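/- arXiv:0812.2179 — 2 statements merged into one kernel-verified Lean document; each statement's English description precedes it below -/
import Mathlib

section
/- There exists a countable tree T of maximal degree 3 with infinitely many leaves such that for every finite set W of leaves of T, the tree T - W is isomorphic to T. -/
/-!
Expand every vertex `g` of the left Cayley graph of a free group to a ray `(g, 0), (g, 1), …`, so
that the infinitely many edges at `g` leave from distinct ray vertices `(g, i + 1)`. The result is
a tree whose leaves are the vertices `(g, 0)`; keep only those with `g ∈ R`. Right translations act
on everything but the choice of `R`, so it suffices to find an infinite `R` such that changing `R`
at finitely many places amounts to a translation.

Both facts about the free group come from defining sets recursively along its Cayley graph, with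
an arbitrary rule for when membership changes across an edge. Making `R` change across the edges
of the `n`-th generator exactly at the `n`-th group element lets the `n`-th generator translate `R`
to `R` changed at that element. Making a set change across one prescribed edge only shows that this
edge is a bridge, so the expanded Cayley graph is acyclic.
-/

open SimpleGraph Set

/-- A leaf of a graph: a vertex with exactly one neighbor (degree 1). -/
def IsLeaf {V : Type*} (G : SimpleGraph V) (x : V) : Prop :=
  (G.neighborSet x).encard = 1

/-- `v` is in the core `c(T)`: deleting `v` leaves at least two infinite components. -/
def InCore {V : Type*} (G : SimpleGraph V) (v : V) : Prop :=
  ∃ C D : (G.induce {u | u ≠ v}).ConnectedComponent,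
    C ≠ D ∧ C.supp.Infinite ∧ D.supp.Infinite

open scoped symmDiff

section FreeGroup

variable {α X : Type*}

theorem freeGroup_apply_eq_apply_one {f : FreeGroup α → X}
    (hf : ∀ a g, f (FreeGroup.of a * g) = f g) (g : FreeGroup α) : f g = f 1 := by
  suffices h : ∀ w g, f (w * g) = f g by simpa using h g 1
  intro w
  induction w using FreeGroup.induction_on with
  | C1 => simp
  | of a => exact hf a
  | inv_of a _ => intro g; simpa using (hf a ((FreeGroup.of a)⁻¹ * g)).symm
  | mul w₁ w₂ h₁ h₂ => intro g; rw [mul_assoc, h₁, h₂]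

-- `f` is read off the orbit of `(1, x₀)` under the action of the free group on
-- `FreeGroup α × X` in which `of a` sends `(g, x)` to `(of a * g, σ a g x)`.
theorem exists_freeGroup_rec (x₀ : X) (σ : α → FreeGroup α → Equiv.Perm X) :
    ∃ f : FreeGroup α → X, ∀ a g, f (FreeGroup.of a * g) = σ a g (f g) := by
  let Φ : FreeGroup α →* Equiv.Perm (FreeGroup α × X) :=
    FreeGroup.lift fun a => (Equiv.mulLeft (FreeGroup.of a)).prodShear (σ a)
  let orbit (g : FreeGroup α) : FreeGroup α × X := Φ g (1, x₀)
  have orbit_of_mul (a : α) (g : FreeGroup α) :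
      orbit (FreeGroup.of a * g) =
        (FreeGroup.of a * (orbit g).1, σ a (orbit g).1 (orbit g).2) := by
    simp only [orbit, Φ, map_mul, FreeGroup.lift_apply_of, Equiv.Perm.mul_apply,
      Equiv.prodShear_apply, Equiv.coe_mulLeft]
  have orbit_fst (g : FreeGroup α) : (orbit g).1 = g := by
    have h : g⁻¹ * (orbit g).1 = 1⁻¹ * (orbit 1).1 :=
      freeGroup_apply_eq_apply_one (f := fun g => g⁻¹ * (orbit g).1)
        (fun a g => by simp only [orbit_of_mul]; group) g
    rw [show orbit 1 = (1, x₀) by simp [orbit], inv_one, one_mul] at h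
    exact (inv_mul_eq_one.1 h).symm
  exact ⟨fun g => (orbit g).2, fun a g => by simp only [orbit_of_mul, orbit_fst]⟩

theorem exists_set_of_mul_mem_iff_xor (p : α → FreeGroup α → Prop) :
    ∃ S : Set (FreeGroup α), ∀ a g, FreeGroup.of a * g ∈ S ↔ Xor (g ∈ S) (p a g) := by
  have xor_involutive (q : Prop) : Function.Involutive (Xor · q) := fun r => by
    by_cases hq : q <;> by_cases hr : r <;> simp [hq, hr]
  obtain ⟨f, hf⟩ := exists_freeGroup_rec False fun a g => (xor_involutive (p a g)).toPerm
  exact ⟨{g | f g}, fun a g => iff_of_eq (hf a g)⟩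

theorem exists_set_mul_of_mem_iff_xor (p : α → FreeGroup α → Prop) :
    ∃ S : Set (FreeGroup α), ∀ a g, g * FreeGroup.of a ∈ S ↔ Xor (g ∈ S) (p a g) := by
  obtain ⟨S, hS⟩ := exists_set_of_mul_mem_iff_xor fun a g => p a (FreeGroup.of a * g)⁻¹
  refine ⟨{g | g⁻¹ ∈ S}, fun a g => ?_⟩
  have h := hS a (g * FreeGroup.of a)⁻¹
  simp only [mul_inv_rev, mul_inv_cancel_left, inv_inv] at h
  simp only [mem_ofPred_eq, mul_inv_rev, h, Xor]
  tauto

end FreeGroup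

section Translation

variable {G : Type*} [Group G] {R : Set G}

/-- Every finite change of `R` can be undone by a right translation. The conclusion is stated for
the preimage under `(· * t)`, which is the right translate by `t⁻¹`. -/
def AbsorbsFiniteChanges (R : Set G) : Prop :=
  ∀ D : Set G, D.Finite → ∃ t, (· * t) ⁻¹' (R ∆ D) = R

theorem absorbsFiniteChanges_of_singleton (h : ∀ a, ∃ t, (· * t) ⁻¹' (R ∆ {a}) = R) :
    AbsorbsFiniteChanges R := by
  intro D hD
  induction D, hD using Set.Finite.induction_on with
  | empty => exact ⟨1, by simp⟩
  | @insert a D ha _ ih =>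
    obtain ⟨t, ht⟩ := ih
    obtain ⟨s, hs⟩ := h (a * t⁻¹)
    have hinsert : R ∆ insert a D = (R ∆ D) ∆ {a} := by
      rw [symmDiff_assoc, (disjoint_singleton_right.2 ha).symmDiff_eq_sup,
        show D ⊔ {a} = insert a D from union_singleton]
    refine ⟨s * t, ?_⟩
    calc (· * (s * t)) ⁻¹' (R ∆ insert a D)
        = (· * s) ⁻¹' (((· * t) ⁻¹' (R ∆ D)) ∆ ((· * t) ⁻¹' {a})) := by
          rw [hinsert, ← preimage_symmDiff, ← preimage_comp]
          simp only [Function.comp_def, mul_assoc]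
      _ = (· * s) ⁻¹' (R ∆ {a * t⁻¹}) := by rw [ht, preimage_mul_right_singleton]
      _ = R := hs

theorem AbsorbsFiniteChanges.infinite (hR : AbsorbsFiniteChanges R) : R.Infinite := by
  intro hfin
  obtain ⟨t, ht⟩ := hR R hfin
  obtain rfl : R = ∅ := by simpa [eq_comm] using ht
  obtain ⟨s, hs⟩ := hR {1} (finite_singleton 1)
  simp at hs

theorem AbsorbsFiniteChanges.exists_preimage_sdiff_eq (hR : AbsorbsFiniteChanges R) {W : Set G}
    (hW : W.Finite) : ∃ t, (· * t) ⁻¹' (R \ W) = R := by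
  obtain ⟨t, ht⟩ := hR (R ∩ W) (hW.inter_of_right R)
  refine ⟨t, ?_⟩
  rwa [symmDiff_of_ge inter_subset_left, sdiff_self_inter] at ht

theorem exists_absorbsFiniteChanges_freeGroup (α : Type*) [Infinite α] :
    ∃ R : Set (FreeGroup α), AbsorbsFiniteChanges R := by
  obtain ⟨e⟩ : Nonempty (α ≃ FreeGroup α) := by
    rw [← Cardinal.eq, Cardinal.mk_freeGroup, max_eq_left (Cardinal.aleph0_le_mk α)]
  obtain ⟨R, hR⟩ := exists_set_mul_of_mem_iff_xor fun a g => g * FreeGroup.of a = e a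
  refine ⟨R, absorbsFiniteChanges_of_singleton fun x => ⟨FreeGroup.of (e.symm x), ?_⟩⟩
  ext g
  have h := hR (e.symm x) g
  rw [e.apply_symm_apply] at h
  simp only [mem_preimage, mem_symmDiff, mem_singleton_iff, h, Xor]
  tauto

end Translation

section Graph

variable {V V' : Type*} {G : SimpleGraph V} {G' : SimpleGraph V'}

theorem isAcyclic_of_forall_exists_cut
    (h : ∀ e ∈ G.edgeSet, ∃ S : Set V, ∀ u v, G.Adj u v → (Xor (u ∈ S) (v ∈ S) ↔ s(u, v) = e)) :
    G.IsAcyclic := by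
  refine isAcyclic_iff_forall_adj_isBridge.2 fun u v huv => isBridge_iff.2 ?_
  obtain ⟨S, hS⟩ := h s(u, v) huv
  have same_side {w : V} (hw : (G.deleteEdges {s(u, v)}).Reachable u w) : u ∈ S ↔ w ∈ S := by
    rw [reachable_iff_reflTransGen] at hw
    induction hw with
    | refl => rfl
    | tail _ hadj ih =>
      rw [deleteEdges_adj, mem_singleton_iff] at hadj
      exact ih.trans ((not_xor _ _).1 (mt (hS _ _ hadj.1).1 hadj.2))
  exact fun hreach => (xor_iff_not_iff _ _).1 ((hS u v huv).2 rfl) (same_side hreach)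

/-- The vertices of `(G.induce s).induce t` are those in the image of `t` in `V`. -/
noncomputable def induceInduceIso (G : SimpleGraph V) (s : Set V) (t : Set s) :
    (G.induce s).induce t ≃g G.induce ((↑) '' t : Set V) where
  toEquiv := Equiv.Set.image _ t Subtype.val_injective
  map_rel_iff' := Iff.rfl

theorem exists_nat_iso [Countable V] [Infinite V] (G : SimpleGraph V) :
    ∃ H : SimpleGraph ℕ, Nonempty (G ≃g H) :=
  have ⟨f⟩ : Nonempty (V ≃ ℕ) := nonempty_equiv_of_countable
  ⟨G.map f, ⟨Iso.map f G⟩⟩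

theorem encard_neighborSet_iso_apply (φ : G ≃g G') (v : V) :
    (G'.neighborSet (φ v)).encard = (G.neighborSet v).encard :=
  (encard_congr (φ.mapNeighborSet v)).symm

theorem isLeaf_iso_apply_iff (φ : G ≃g G') (v : V) : IsLeaf G' (φ v) ↔ IsLeaf G v := by
  rw [IsLeaf, IsLeaf, encard_neighborSet_iso_apply]

/-- `T ≅ T - W` for every finite set `W` of leaves of `T`. -/
def IsLeafRemovalInvariant (G : SimpleGraph V) : Prop :=
  ∀ W : Set V, W.Finite → (∀ w ∈ W, IsLeaf G w) → Nonempty (G ≃g G.induce {v | v ∉ W})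

theorem IsLeafRemovalInvariant.of_iso (hG : IsLeafRemovalInvariant G) (φ : G ≃g G') :
    IsLeafRemovalInvariant G' := by
  intro W hW hleaf
  obtain ⟨ψ⟩ := hG (φ ⁻¹' W) (hW.preimage φ.injective.injOn) fun w hw =>
    (isLeaf_iso_apply_iff φ w).1 (hleaf _ hw)
  exact ⟨φ.symm.trans (ψ.trans (φ.induce (φ.bijective.bijOn_preimage (t := Wᶜ))))⟩

end Graph

section RayCayleyGraph

variable {α : Type*} (ν : α ⊕ α ≃ ℕ)

/-- The edges of `rayCayleyGraph ν`, each with one orientation. -/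
inductive RayCayleyArc : FreeGroup α × ℕ → FreeGroup α × ℕ → Prop
  | ray (g : FreeGroup α) (i : ℕ) : RayCayleyArc (g, i) (g, i + 1)
  | cross (a : α) (g : FreeGroup α) :
      RayCayleyArc (g, ν (.inl a) + 1) (FreeGroup.of a * g, ν (.inr a) + 1)

/-- The left Cayley graph of the free group on `α` with every vertex `g` expanded to a ray
`(g, 0), (g, 1), …`. The enumeration `ν` tells where the Cayley edges attach: those leaving `g`
along the generator `a` at `ν (.inl a) + 1`, those entering `g` along `a` at `ν (.inr a) + 1`. -/
def rayCayleyGraph : SimpleGraph (FreeGroup α × ℕ) :=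
  SimpleGraph.fromRel (RayCayleyArc ν)

variable {ν}

theorem RayCayleyArc.ne : ∀ {u v : FreeGroup α × ℕ}, RayCayleyArc ν u v → u ≠ v
  | _, _, .ray g i => by simp
  | _, _, .cross a g => by simp

theorem rayCayleyGraph_adj_iff {u v : FreeGroup α × ℕ} :
    (rayCayleyGraph ν).Adj u v ↔ RayCayleyArc ν u v ∨ RayCayleyArc ν v u :=
  (fromRel_adj _ _ _).trans (and_iff_right_of_imp (Or.rec (·.ne) (·.ne.symm)))

theorem rayCayleyGraph_adj_ray (g : FreeGroup α) (i : ℕ) :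
    (rayCayleyGraph ν).Adj (g, i) (g, i + 1) :=
  rayCayleyGraph_adj_iff.2 (.inl (.ray g i))

theorem rayCayleyGraph_adj_cross (a : α) (g : FreeGroup α) :
    (rayCayleyGraph ν).Adj (g, ν (.inl a) + 1) (FreeGroup.of a * g, ν (.inr a) + 1) :=
  rayCayleyGraph_adj_iff.2 (.inl (.cross a g))

theorem exists_cut_rayCayleyGraph (E : Set (Sym2 (FreeGroup α × ℕ))) :
    ∃ S : Set (FreeGroup α × ℕ), ∀ u v, (rayCayleyGraph ν).Adj u v →
      (Xor (u ∈ S) (v ∈ S) ↔ s(u, v) ∈ E) := by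
  let onRay (g : FreeGroup α) (i : ℕ) : Prop :=
    Nat.rec False (fun i q => Xor q (s((g, i), (g, i + 1)) ∈ E)) i
  obtain ⟨B, hB⟩ := exists_set_of_mul_mem_iff_xor fun a g =>
    Xor (Xor (onRay g (ν (.inl a) + 1)) (onRay (FreeGroup.of a * g) (ν (.inr a) + 1)))
      (s((g, ν (.inl a) + 1), (FreeGroup.of a * g, ν (.inr a) + 1)) ∈ E)
  let S : Set (FreeGroup α × ℕ) := {v | Xor (v.1 ∈ B) (onRay v.1 v.2)}
  have arc_mem_iff {u v} (h : RayCayleyArc ν u v) : Xor (u ∈ S) (v ∈ S) ↔ s(u, v) ∈ E := by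
    cases h with
    | ray g i =>
      have h : onRay g (i + 1) = Xor (onRay g i) (s((g, i), (g, i + 1)) ∈ E) := rfl
      simp only [S, mem_ofPred_eq, h]
      grind
    | cross a g =>
      simp only [S, mem_ofPred_eq, hB]
      grind
  refine ⟨S, fun u v huv => ?_⟩
  rcases rayCayleyGraph_adj_iff.1 huv with h | h
  · exact arc_mem_iff h
  · rw [_root_.xor_comm, Sym2.eq_swap]
    exact arc_mem_iff h

theorem rayCayleyGraph_isAcyclic : (rayCayleyGraph ν).IsAcyclic :=
  isAcyclic_of_forall_exists_cut fun e _ => exists_cut_rayCayleyGraph {e}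

variable (ν) in
/-- The other end of the Cayley edge attached at `(g, i + 1)`. -/
def crossNeighbor (g : FreeGroup α) (i : ℕ) : FreeGroup α × ℕ :=
  match ν.symm i with
  | .inl a => (FreeGroup.of a * g, ν (.inr a) + 1)
  | .inr a => ((FreeGroup.of a)⁻¹ * g, ν (.inl a) + 1)

theorem crossNeighbor_fst_ne (g : FreeGroup α) (i : ℕ) : (crossNeighbor ν g i).1 ≠ g := by
  unfold crossNeighbor
  split <;> simp

theorem crossNeighbor_snd_ne_zero (g : FreeGroup α) (i : ℕ) : (crossNeighbor ν g i).2 ≠ 0 := by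
  unfold crossNeighbor
  split <;> simp

theorem rayCayleyGraph_adj_crossNeighbor (g : FreeGroup α) (i : ℕ) :
    (rayCayleyGraph ν).Adj (g, i + 1) (crossNeighbor ν g i) := by
  obtain ⟨a | a, rfl⟩ := ν.surjective i
  · simpa [crossNeighbor] using rayCayleyGraph_adj_cross a g
  · simpa [crossNeighbor] using (rayCayleyGraph_adj_cross a ((FreeGroup.of a)⁻¹ * g)).symm

theorem neighborSet_rayCayleyGraph_zero (g : FreeGroup α) :
    (rayCayleyGraph ν).neighborSet (g, 0) = {(g, 1)} := by
  ext w
  refine ⟨fun h => ?_, ?_⟩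
  · rcases rayCayleyGraph_adj_iff.1 h with h | h <;> cases h
    rfl
  · rintro rfl
    exact rayCayleyGraph_adj_ray g 0

theorem neighborSet_rayCayleyGraph_succ (g : FreeGroup α) (i : ℕ) :
    (rayCayleyGraph ν).neighborSet (g, i + 1) = {(g, i), (g, i + 2), crossNeighbor ν g i} := by
  ext w
  refine ⟨fun h => ?_, ?_⟩
  · rcases rayCayleyGraph_adj_iff.1 h with h | h <;> cases h <;> simp [crossNeighbor]
  · rintro (rfl | rfl | rfl)
    · exact (rayCayleyGraph_adj_ray g i).symm
    · exact rayCayleyGraph_adj_ray g (i + 1)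
    · exact rayCayleyGraph_adj_crossNeighbor g i

theorem encard_neighborSet_rayCayleyGraph_le (v : FreeGroup α × ℕ) :
    ((rayCayleyGraph ν).neighborSet v).encard ≤ 3 := by
  obtain ⟨g, _ | i⟩ := v
  · rw [neighborSet_rayCayleyGraph_zero, encard_singleton]
    norm_num
  · rw [neighborSet_rayCayleyGraph_succ]
    calc ({(g, i), (g, i + 2), crossNeighbor ν g i} : Set _).encard
        ≤ ({crossNeighbor ν g i} : Set _).encard + 1 + 1 :=
          (encard_insert_le _ _).trans (add_le_add_left (encard_insert_le _ _) 1)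
      _ = 3 := by rw [encard_singleton]; norm_num

theorem RayCayleyArc.mul_right {u v : FreeGroup α × ℕ} (t : FreeGroup α) :
    RayCayleyArc ν u v → RayCayleyArc ν (u.1 * t, u.2) (v.1 * t, v.2)
  | .ray g i => .ray (g * t) i
  | .cross a g => mul_assoc (FreeGroup.of a) g t ▸ .cross a (g * t)

theorem rayCayleyArc_mul_right_iff {u v : FreeGroup α × ℕ} {t : FreeGroup α} :
    RayCayleyArc ν (u.1 * t, u.2) (v.1 * t, v.2) ↔ RayCayleyArc ν u v :=
  ⟨fun h => by simpa using h.mul_right t⁻¹, .mul_right t⟩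

/-- Right translation by `t` as an automorphism of `rayCayleyGraph ν`. -/
def rayCayleyGraphTranslate (t : FreeGroup α) : rayCayleyGraph ν ≃g rayCayleyGraph ν where
  toEquiv := (Equiv.mulRight t).prodCongr (Equiv.refl ℕ)
  map_rel_iff' :=
    (rayCayleyGraph_adj_iff.trans
      (or_congr rayCayleyArc_mul_right_iff rayCayleyArc_mul_right_iff)).trans
      rayCayleyGraph_adj_iff.symm

end RayCayleyGraph

section RayTree

variable {α : Type*} {ν : α ⊕ α ≃ ℕ} {R : Set (FreeGroup α)}

/-- The vertices of `rayCayleyGraph ν` that remain when the leaves `(g, 0)` with `g ∉ R` are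
deleted. -/
def rayTreeVertices (R : Set (FreeGroup α)) : Set (FreeGroup α × ℕ) :=
  {v | v.2 = 0 → v.1 ∈ R}

variable (ν R) in
/-- The tree obtained from `rayCayleyGraph ν` by deleting the leaves `(g, 0)` with `g ∉ R`. -/
abbrev rayTree : SimpleGraph (rayTreeVertices R) :=
  (rayCayleyGraph ν).induce (rayTreeVertices R)

theorem mk_mem_rayTreeVertices {g : FreeGroup α} {i : ℕ} (hi : i ≠ 0) :
    (g, i) ∈ rayTreeVertices R :=
  fun h => absurd h hi

theorem rayTree_connected : (rayTree ν R).Connected := by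
  let start (g : FreeGroup α) : rayTreeVertices R := ⟨(g, 1), mk_mem_rayTreeVertices one_ne_zero⟩
  have reachable_of_adj {u v : rayTreeVertices R} (h : (rayCayleyGraph ν).Adj u v) :
      (rayTree ν R).Reachable u v := Adj.reachable h
  have ray (g : FreeGroup α) (i : ℕ) : (rayTree ν R).Reachable
      ⟨(g, i + 1), mk_mem_rayTreeVertices i.succ_ne_zero⟩ (start g) := by
    induction i with
    | zero => rfl
    | succ i ih => exact (reachable_of_adj (rayCayleyGraph_adj_ray g (i + 1)).symm).trans ih
  have start_of_mul (a : α) (g : FreeGroup α) :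
      (rayTree ν R).Reachable (start (FreeGroup.of a * g)) (start g) :=
    (ray _ (ν (.inr a))).symm.trans
      ((reachable_of_adj (rayCayleyGraph_adj_cross a g).symm).trans (ray g (ν (.inl a))))
  have start_one (g : FreeGroup α) : (rayTree ν R).Reachable (start g) (start 1) :=
    ConnectedComponent.exact <| freeGroup_apply_eq_apply_one
      (f := fun g => (rayTree ν R).connectedComponentMk (start g))
      (fun a g => ConnectedComponent.sound (start_of_mul a g)) g
  refine connected_iff_exists_forall_reachable _ |>.2 ⟨start 1, fun v => Reachable.symm ?_⟩
  obtain ⟨⟨g, _ | i⟩, hv⟩ := v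
  · exact (reachable_of_adj (rayCayleyGraph_adj_ray g 0)).trans (start_one g)
  · exact (ray g i).trans (start_one g)

theorem rayTree_isTree : (rayTree ν R).IsTree :=
  ⟨rayTree_connected, rayCayleyGraph_isAcyclic.induce _⟩

theorem encard_neighborSet_rayTree_le (v : rayTreeVertices R) :
    ((rayTree ν R).neighborSet v).encard ≤ 3 := by
  rw [neighborSet_induce]
  exact (encard_preimage_val_le_encard_right _ _).trans (encard_neighborSet_rayCayleyGraph_le _)

theorem isLeaf_rayTree_iff {v : rayTreeVertices R} : IsLeaf (rayTree ν R) v ↔ v.1.2 = 0 := by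
  obtain ⟨⟨g, _ | i⟩, hv⟩ := v
  · refine iff_of_true ?_ rfl
    rw [IsLeaf, neighborSet_induce, neighborSet_rayCayleyGraph_zero,
      encard_preimage_of_injective_subset_range Subtype.val_injective, encard_singleton]
    rw [singleton_subset_iff, Subtype.range_coe]
    exact mk_mem_rayTreeVertices one_ne_zero
  · refine iff_of_false (fun hleaf => ?_) i.succ_ne_zero
    have hnext : (rayTree ν R).Adj ⟨(g, i + 1), hv⟩
      ⟨(g, i + 2), mk_mem_rayTreeVertices (i + 1).succ_ne_zero⟩ := rayCayleyGraph_adj_ray g (i + 1)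
    have hcross : (rayTree ν R).Adj ⟨(g, i + 1), hv⟩
      ⟨crossNeighbor ν g i, mk_mem_rayTreeVertices (crossNeighbor_snd_ne_zero g i)⟩ :=
      rayCayleyGraph_adj_crossNeighbor g i
    have heq := encard_le_one_iff.1 hleaf.le _ _ hcross hnext
    exact crossNeighbor_fst_ne g i (congrArg (·.1.1) heq)

theorem infinite_setOf_isLeaf_rayTree (hR : R.Infinite) :
    {v | IsLeaf (rayTree ν R) v}.Infinite := by
  have := hR.to_subtype
  refine infinite_of_injective_forall_mem
    (f := fun g : R => (⟨(g, 0), fun _ => g.2⟩ : rayTreeVertices R)) (fun g h hgh => ?_)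
    fun g => isLeaf_rayTree_iff.2 rfl
  simpa [Subtype.ext_iff] using hgh

theorem image_val_compl_eq_rayTreeVertices {W : Set (rayTreeVertices R)}
    (hW : ∀ w ∈ W, w.1.2 = 0) :
    ((↑) '' {v | v ∉ W} : Set (FreeGroup α × ℕ)) =
      rayTreeVertices (R \ (fun w => w.1.1) '' W) := by
  ext v
  constructor
  · rintro ⟨u, hu, rfl⟩ hu₀
    refine ⟨u.2 hu₀, ?_⟩
    rintro ⟨w, hw, hwu⟩
    have huw : w = u := Subtype.ext (Prod.ext hwu ((hW w hw).trans hu₀.symm))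
    exact hu (huw ▸ hw)
  · exact fun hv => ⟨⟨v, fun hv₀ => (hv hv₀).1⟩,
      fun hvW => (hv (hW _ hvW)).2 (mem_image_of_mem _ hvW), rfl⟩

theorem bijOn_rayCayleyGraphTranslate {t : FreeGroup α} (S : Set (FreeGroup α)) :
    BijOn (rayCayleyGraphTranslate (ν := ν) t) (rayTreeVertices ((· * t) ⁻¹' S))
      (rayTreeVertices S) :=
  (rayCayleyGraphTranslate t).bijective.bijOn_preimage (t := rayTreeVertices S)

theorem AbsorbsFiniteChanges.isLeafRemovalInvariant_rayTree (hR : AbsorbsFiniteChanges R) :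
    IsLeafRemovalInvariant (rayTree ν R) := by
  intro W hW hleaf
  obtain ⟨t, ht⟩ := hR.exists_preimage_sdiff_eq (hW.image fun w => w.1.1)
  have hbij := bijOn_rayCayleyGraphTranslate (ν := ν) (t := t) (R \ (fun w => w.1.1) '' W)
  rw [ht, ← image_val_compl_eq_rayTreeVertices fun w hw => isLeaf_rayTree_iff.1 (hleaf w hw)]
    at hbij
  exact ⟨((rayCayleyGraphTranslate t).induce hbij).trans (induceInduceIso _ _ _).symm⟩

end RayTree

/-- there is a countable tree of maximal degree 3 with infinitely
many leaves such that T ≅ T - W for every finite set W of leaves. -/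
theorem stmt_10 :
    ∃ G : SimpleGraph ℕ, G.IsTree ∧ (∀ v, (G.neighborSet v).encard ≤ 3) ∧
      {x | IsLeaf G x}.Infinite ∧
      ∀ W : Set ℕ, W.Finite → (∀ w ∈ W, IsLeaf G w) →
        Nonempty (G ≃g G.induce {v | v ∉ W}) := by
  obtain ⟨R, hR⟩ := exists_absorbsFiniteChanges_freeGroup ℕ
  let T := rayTree Equiv.natSumNatEquivNat R
  have hleaves : {v | IsLeaf T v}.Infinite := infinite_setOf_isLeaf_rayTree hR.infinite
  have : Infinite (rayTreeVertices R) := infinite_univ_iff.1 (hleaves.mono (subset_univ _))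
  obtain ⟨G, ⟨φ⟩⟩ := exists_nat_iso T
  refine ⟨G, φ.isTree_iff.1 rayTree_isTree, fun v => ?_, ?_,
    hR.isLeafRemovalInvariant_rayTree.of_iso φ⟩
  · rw [← encard_neighborSet_iso_apply φ.symm]
    exact encard_neighborSet_rayTree_le _
  · simpa only [preimage_ofPred_eq, isLeaf_iso_apply_iff] using
      hleaves.preimage (f := φ.symm) (by simp [φ.symm.surjective.range_eq])
end

section
/- If T is a locally finite infinite tree with a vertex of degree at least 3, and T ≅ T - x for some leaf x with the isomorphism applicable repeatedly (i.e. T ≅ T - W for every finite set W of leaves), then T has infinitely many leaves. -/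
open SimpleGraph Set

/-!
Suppose that `G` has finitely many leaves and `G ≅ G - x` for one leaf `x`, with neighbor `y`.
Deleting `x` must turn `y` into a leaf, since otherwise the number of leaves drops; so `y` has
degree two. Then the branch vertices (those of degree at least three) and all remaining distances
are unchanged, while the leaf `x` is replaced by `y`, which is one step closer to every branch
vertex. Hence the sum, over all leaves, of the distance to the nearest branch vertex drops by
exactly one. This sum is an isomorphism invariant, and it is finite when `G` is connected and has
a branch vertex.
-/

section LeafDeletion

variable {V W : Type*} {G : SimpleGraph V} {H : SimpleGraph W}

theorem edist_map_le (f : G →g H) (u v : V) : H.edist (f u) (f v) ≤ G.edist u v :=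
  le_iInf fun p ↦ (SimpleGraph.edist_le (p.map f)).trans_eq (by rw [Walk.length_map])

theorem edist_map_iso (φ : G ≃g H) (u v : V) : H.edist (φ u) (φ v) = G.edist u v :=
  (edist_map_le φ.toHom u v).antisymm <| by
    simpa using edist_map_le φ.symm.toHom (φ u) (φ v)

theorem edist_induce_of_subsingleton_neighborSet {s : Set V}
    (hs : ∀ v ∉ s, (G.neighborSet v).Subsingleton) (u v : s) :
    (G.induce s).edist u v = G.edist u v := by
  classical
  refine (le_iInf fun p ↦ ?_).antisymm (edist_map_le (Embedding.induce s).toHom u v)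
  have hmem : ∀ w ∈ p.bypass.support, w ∈ s := by
    intro w hw
    by_contra hws
    exact p.bypass_isPath.not_mem_support_of_subsingleton_neighborSet
      (by grind) (by grind) (hs w hws) hw
  calc (G.induce s).edist u v ≤ (p.bypass.induce s hmem).length := SimpleGraph.edist_le _
    _ = p.bypass.length := by
      rw [← Walk.length_map (Embedding.induce s).toHom, Walk.map_induce]
      rfl
    _ ≤ p.length := by exact_mod_cast p.length_bypass_le_length

theorem encard_neighborSet_map_iso (φ : G ≃g H) (v : V) :
    (H.neighborSet (φ v)).encard = (G.neighborSet v).encard :=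
  (Set.encard_congr (φ.mapNeighborSet v)).symm

theorem encard_neighborSet_induce (s : Set V) (a : s) :
    ((G.induce s).neighborSet a).encard = (G.neighborSet a ∩ s).encard := by
  rw [← Subtype.val_injective.encard_image]
  congr 1
  ext b
  simp [and_comm]

theorem encard_neighborSet_induce_ne_of_not_adj {x : V} (a : {v | v ≠ x}) (ha : ¬ G.Adj x a) :
    ((G.induce {v | v ≠ x}).neighborSet a).encard = (G.neighborSet a).encard := by
  rw [encard_neighborSet_induce, Set.inter_eq_left.2]
  rintro b hb rfl
  exact ha (G.adj_symm hb)

theorem encard_neighborSet_induce_ne_add_one {x : V} (a : {v | v ≠ x}) (ha : G.Adj x a) :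
    ((G.induce {v | v ≠ x}).neighborSet a).encard + 1 = (G.neighborSet a).encard := by
  rw [encard_neighborSet_induce,
    ← Set.encard_sdiff_singleton_add_one (show x ∈ G.neighborSet a from ha.symm)]
  rfl

/-- A branch vertex of a graph: a vertex of degree at least three, possibly infinite. -/
def IsBranchVertex (G : SimpleGraph V) (v : V) : Prop :=
  3 ≤ (G.neighborSet v).encard

/-- The distance from `u` to the nearest branch vertex; it is `⊤` if no branch vertex can be
reached from `u`. -/
noncomputable def branchDist (G : SimpleGraph V) (u : V) : ℕ∞ :=
  ⨅ v : {v // IsBranchVertex G v}, G.edist u v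

/-- The sum over all leaves of the distance to the nearest branch vertex. This is the invariant
which drops when a leaf is deleted; it is meant for graphs with finitely many leaves, as `finsum`
takes the value `0` on infinite supports. -/
noncomputable def totalLeafBranchDist (G : SimpleGraph V) : ℕ∞ :=
  ∑ᶠ x ∈ {x | IsLeaf G x}, branchDist G x

theorem isLeaf_map_iso_iff (φ : G ≃g H) {v : V} : IsLeaf H (φ v) ↔ IsLeaf G v := by
  rw [IsLeaf, IsLeaf, encard_neighborSet_map_iso]

theorem isBranchVertex_map_iso_iff (φ : G ≃g H) {v : V} :
    IsBranchVertex H (φ v) ↔ IsBranchVertex G v := by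
  rw [IsBranchVertex, IsBranchVertex, encard_neighborSet_map_iso]

theorem bijOn_setOf_isLeaf_iso (φ : G ≃g H) :
    Set.BijOn φ {x | IsLeaf G x} {x | IsLeaf H x} :=
  φ.toEquiv.bijOn fun _ ↦ isLeaf_map_iso_iff φ

theorem branchDist_map_iso (φ : G ≃g H) (u : V) : branchDist H (φ u) = branchDist G u :=
  ((φ.toEquiv.subtypeEquiv fun _ ↦ (isBranchVertex_map_iso_iff φ).symm).iInf_congr
    fun v ↦ edist_map_iso φ u v).symm

theorem totalLeafBranchDist_congr_iso (φ : G ≃g H) :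
    totalLeafBranchDist G = totalLeafBranchDist H :=
  finsum_mem_eq_of_bijOn φ (bijOn_setOf_isLeaf_iso φ) fun x _ ↦ (branchDist_map_iso φ x).symm

theorem branchDist_ne_top (hG : G.Preconnected) (hbranch : ∃ v, IsBranchVertex G v) (u : V) :
    branchDist G u ≠ ⊤ := by
  obtain ⟨v, hv⟩ := hbranch
  exact ne_top_of_le_ne_top (edist_ne_top_iff_reachable.2 (hG u v))
    (iInf_le (fun v : {v // IsBranchVertex G v} ↦ G.edist u v) ⟨v, hv⟩)

theorem totalLeafBranchDist_ne_top (hG : G.Preconnected) (hbranch : ∃ v, IsBranchVertex G v) :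
    totalLeafBranchDist G ≠ ⊤ :=
  finsum_mem_induction (· ≠ ⊤) ENat.zero_ne_top (fun _ _ ha hb ↦ WithTop.add_ne_top.2 ⟨ha, hb⟩)
    fun x _ ↦ branchDist_ne_top hG hbranch x

namespace IsLeaf

variable {x y : V}

theorem exists_adj (hx : IsLeaf G x) : ∃ y, G.Adj x y :=
  Set.nonempty_of_encard_ne_zero (hx.trans_ne one_ne_zero)

theorem subsingleton_neighborSet (hx : IsLeaf G x) : (G.neighborSet x).Subsingleton :=
  Set.encard_le_one_iff_subsingleton.1 hx.le

theorem not_isBranchVertex (hx : IsLeaf G x) : ¬ IsBranchVertex G x := by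
  rw [IsBranchVertex, hx]
  norm_num

theorem encard_neighborSet_induce_of_ne (hx : IsLeaf G x) (hxy : G.Adj x y)
    (a : {v | v ≠ x}) (hay : (a : V) ≠ y) :
    ((G.induce {v | v ≠ x}).neighborSet a).encard = (G.neighborSet a).encard :=
  encard_neighborSet_induce_ne_of_not_adj a fun ha ↦ hay (hx.subsingleton_neighborSet ha hxy)

theorem edist_induce (hx : IsLeaf G x) (u v : {v | v ≠ x}) :
    (G.induce {v | v ≠ x}).edist u v = G.edist u v :=
  edist_induce_of_subsingleton_neighborSet
    (fun w hw ↦ (not_not.1 hw : w = x) ▸ hx.subsingleton_neighborSet) u v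

theorem edist_eq_add_one (hx : IsLeaf G x) (hxy : G.Adj x y) {v : V} (hv : v ≠ x) :
    G.edist x v = G.edist y v + 1 := by
  refine le_antisymm ?_ (le_iInf fun p ↦ ?_)
  · rw [add_comm, ← edist_eq_one_iff_adj.2 hxy]
    exact SimpleGraph.edist_triangle
  · cases p with
    | nil => exact absurd rfl hv
    | cons hxz q =>
      obtain rfl := hx.subsingleton_neighborSet hxy hxz
      rw [Walk.length_cons, Nat.cast_add_one]
      gcongr
      exact SimpleGraph.edist_le q

theorem branchDist_eq_add_one (hx : IsLeaf G x) (hxy : G.Adj x y) :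
    branchDist G x = branchDist G y + 1 := by
  rw [branchDist, branchDist, ENat.iInf_add]
  refine iInf_congr fun v ↦ hx.edist_eq_add_one hxy ?_
  rintro rfl
  exact hx.not_isBranchVertex v.2

theorem image_setOf_isLeaf_induce_subset (hx : IsLeaf G x) (hxy : G.Adj x y)
    (hy : (G.neighborSet y).encard ≠ 2) :
    Subtype.val '' {a | IsLeaf (G.induce {v | v ≠ x}) a} ⊆ {a | IsLeaf G a} \ {x} := by
  rintro _ ⟨a, ha : _ = _, rfl⟩
  have hay : (a : V) ≠ y := by
    rintro rfl
    rw [← encard_neighborSet_induce_ne_add_one a hxy, ha, one_add_one_eq_two] at hy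
    exact hy rfl
  exact ⟨(hx.encard_neighborSet_induce_of_ne hxy a hay).symm.trans ha, a.2⟩

theorem encard_neighborSet_eq_two_of_iso (hx : IsLeaf G x) (hxy : G.Adj x y)
    (hfin : {a | IsLeaf G a}.Finite) (φ : G ≃g G.induce {v | v ≠ x}) :
    (G.neighborSet y).encard = 2 := by
  by_contra hy
  have hlt : ({a | IsLeaf G a} \ {x}).encard < {a | IsLeaf G a}.encard :=
    hfin.sdiff.encard_lt_encard (Set.sdiff_singleton_ssubset.2 hx)
  refine hlt.not_ge ?_
  calc {a | IsLeaf G a}.encard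
      = {a | IsLeaf (G.induce {v | v ≠ x}) a}.encard := by
        rw [← (bijOn_setOf_isLeaf_iso φ).image_eq, φ.injective.encard_image]
    _ = (Subtype.val '' {a | IsLeaf (G.induce {v | v ≠ x}) a}).encard :=
        (Subtype.val_injective.encard_image _).symm
    _ ≤ ({a | IsLeaf G a} \ {x}).encard :=
        Set.encard_le_encard (hx.image_setOf_isLeaf_induce_subset hxy hy)

section NeighborOfDegreeTwo

variable (hx : IsLeaf G x) (hxy : G.Adj x y) (hy : (G.neighborSet y).encard = 2)
include hx hxy hy

theorem isLeaf_induce_iff (a : {v | v ≠ x}) :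
    IsLeaf (G.induce {v | v ≠ x}) a ↔ (a : V) = y ∨ IsLeaf G a := by
  by_cases hay : (a : V) = y
  · subst hay
    have hdeg := encard_neighborSet_induce_ne_add_one a hxy
    rw [hy, ← one_add_one_eq_two] at hdeg
    exact iff_of_true (WithTop.add_right_cancel ENat.one_ne_top hdeg) (.inl rfl)
  · rw [IsLeaf, hx.encard_neighborSet_induce_of_ne hxy a hay, or_iff_right hay, IsLeaf]

theorem isBranchVertex_induce_iff (a : {v | v ≠ x}) :
    IsBranchVertex (G.induce {v | v ≠ x}) a ↔ IsBranchVertex G a := by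
  by_cases hay : (a : V) = y
  · have hleaf : IsLeaf (G.induce {v | v ≠ x}) a := (hx.isLeaf_induce_iff hxy hy a).2 (.inl hay)
    refine iff_of_false hleaf.not_isBranchVertex ?_
    rw [IsBranchVertex, hay, hy]
    norm_num
  · rw [IsBranchVertex, hx.encard_neighborSet_induce_of_ne hxy a hay, IsBranchVertex]

theorem branchDist_induce (a : {v | v ≠ x}) :
    branchDist (G.induce {v | v ≠ x}) a = branchDist G a := by
  refine le_antisymm (le_iInf fun v ↦ ?_) (le_iInf fun v ↦ ?_)
  · have hvx : (v : V) ≠ x := fun h ↦ hx.not_isBranchVertex (h ▸ v.2)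
    rw [← hx.edist_induce a ⟨v, hvx⟩]
    exact iInf_le (fun w : {w // IsBranchVertex (G.induce {v | v ≠ x}) w} ↦
      (G.induce {v | v ≠ x}).edist a w)
      ⟨⟨v, hvx⟩, (hx.isBranchVertex_induce_iff hxy hy _).2 v.2⟩
  · rw [hx.edist_induce]
    exact iInf_le (fun w : {w // IsBranchVertex G w} ↦ G.edist a w)
      ⟨v, (hx.isBranchVertex_induce_iff hxy hy _).1 v.2⟩

theorem image_setOf_isLeaf_induce :
    Subtype.val '' {a | IsLeaf (G.induce {v | v ≠ x}) a} = insert y ({a | IsLeaf G a} \ {x}) := by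
  ext a
  constructor
  · rintro ⟨a, ha, rfl⟩
    exact ((hx.isLeaf_induce_iff hxy hy a).1 ha).imp_right fun h ↦ ⟨h, a.2⟩
  · intro ha
    have hax : a ≠ x := ha.elim (fun h ↦ h ▸ hxy.ne') fun h ↦ h.2
    exact ⟨⟨a, hax⟩, (hx.isLeaf_induce_iff hxy hy ⟨a, hax⟩).2 (ha.imp_right And.left), rfl⟩

theorem totalLeafBranchDist_eq_add_one (hfin : {a | IsLeaf G a}.Finite) :
    totalLeafBranchDist G = totalLeafBranchDist (G.induce {v | v ≠ x}) + 1 := by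
  have hyleaf : ¬ IsLeaf G y := fun h ↦ absurd (hy.symm.trans h) (by norm_num)
  have hsum : totalLeafBranchDist (G.induce {v | v ≠ x}) =
      branchDist G y + ∑ᶠ a ∈ {a | IsLeaf G a} \ {x}, branchDist G a := by
    rw [← finsum_mem_insert _ (fun h ↦ hyleaf h.1) hfin.sdiff,
      ← hx.image_setOf_isLeaf_induce hxy hy, finsum_mem_image Subtype.val_injective.injOn]
    exact finsum_mem_congr rfl fun a _ ↦ hx.branchDist_induce hxy hy a
  calc totalLeafBranchDist G
      = ∑ᶠ a ∈ insert x ({a | IsLeaf G a} \ {x}), branchDist G a := by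
        rw [Set.insert_sdiff_self_of_mem (show x ∈ {a | IsLeaf G a} from hx), totalLeafBranchDist]
    _ = branchDist G y + 1 + ∑ᶠ a ∈ {a | IsLeaf G a} \ {x}, branchDist G a := by
        rw [finsum_mem_insert _ (Set.notMem_sdiff_of_mem (Set.mem_singleton x)) hfin.sdiff,
          hx.branchDist_eq_add_one hxy]
    _ = totalLeafBranchDist (G.induce {v | v ≠ x}) + 1 := by
        rw [hsum, add_right_comm]

end NeighborOfDegreeTwo

end IsLeaf

theorem stmt_13_general (hG : G.Preconnected) (hdeg : ∃ v, 3 ≤ (G.neighborSet v).encard)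
    (hx : ∃ x, IsLeaf G x ∧ Nonempty (G ≃g G.induce {v | v ≠ x})) :
    {x | IsLeaf G x}.Infinite := by
  intro hfin
  obtain ⟨x, hx, ⟨φ⟩⟩ := hx
  obtain ⟨y, hxy⟩ := hx.exists_adj
  have hy : (G.neighborSet y).encard = 2 := hx.encard_neighborSet_eq_two_of_iso hxy hfin φ
  have hdrop : totalLeafBranchDist G = totalLeafBranchDist G + 1 := by
    conv_rhs => rw [totalLeafBranchDist_congr_iso φ]
    exact hx.totalLeafBranchDist_eq_add_one hxy hy hfin
  have hfinite : totalLeafBranchDist G ≠ ⊤ := totalLeafBranchDist_ne_top hG hdeg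
  exact ((ENat.lt_add_one_iff hfinite).2 le_rfl).ne hdrop

end LeafDeletion

/-- a locally finite infinite tree with a vertex of degree ≥ 3
satisfying T ≅ T - W for all finite sets of leaves (in particular T ≅ T - x for
some leaf x) has infinitely many leaves. -/
theorem stmt_13 {V : Type*} (G : SimpleGraph V) (hT : G.IsTree)
    (hinf : Infinite V) (hlf : ∀ v, (G.neighborSet v).Finite)
    (hdeg : ∃ v, 3 ≤ (G.neighborSet v).encard)
    (hx : ∃ x, IsLeaf G x ∧ Nonempty (G ≃g G.induce {v | v ≠ x}))
    (h : ∀ W : Set V, W.Finite → (∀ w ∈ W, IsLeaf G w) →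
      Nonempty (G ≃g G.induce {v | v ∉ W})) :
    {x | IsLeaf G x}.Infinite :=
  stmt_13_general hT.connected.preconnected hdeg hx
end
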